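/- In Construction 2, assume w(M₁′) ≤ w(M₂′). Then M₁′ is a minimum-weight perfect matching of the complete bipartite graph on (A, B), its weight equals Σ_{k odd, 1 ≤ k ≤ 2ℓ} ‖t_{k−1} − t_k‖ + 3ℓq, and every perfect matching M with M ∉ {M₁′, M₂′} satisfies w(M) > w(M₁′). -/

import Mathlib

/-!
The cheap edges are those of length about `q = n ^ 4`. Since `Δ_k ≤ n²`, an edge
`t_{k-1} t_k` has length at most `q + 1/2`, so `M₁′` weighs at most `4ℓq + ℓ/2`
(`mWeight_M1'` and `odd_edge_le`).

For a lower bound, sum the weight of a matching over `B`: every edge at an odd `t_k` costs at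
least `q`, because an even and an odd multiple of `q` are at least `q` apart, and `s₁` is at
distance at least `2ℓq` from it.
* If `s₁` is matched to some `t_k`, then all three `s`-points pay the vertical distance `2ℓq`, for
  a total of at least `7ℓq - q`.
* If `s₁` is matched to `s₀`, then `s₂` is matched to some `t_{2j}`. For `j < ℓ` that edge is
  skew and has length at least `2ℓq + ℓ`, so the total is at least `4ℓq + ℓ`. For `j = ℓ`,
  either some horizontal gap is at least `3q`, so the total is at least `4ℓq + 2q`, or all gaps equal `q` and
  the matching is forced, edge by edge from the right, to be `M₁′`.
* If `s₁` is matched to `s₂`, the mirror image of the previous argument yields `M₂′`.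

Hence every matching other than `M₁′` and `M₂′` weighs more than `4ℓq + ℓ/2`
(`eq_or_eq_or_lower`).
-/

open scoped BigOperators

/-- A point of `ℝ²` from two coordinates. -/
noncomputable def mk2 (x y : ℝ) : EuclideanSpace ℝ (Fin 2) :=
  (WithLp.equiv 2 (Fin 2 → ℝ)).symm ![x, y]

/-- Construction 2: `y₀ = 0` and `y_{k} = y_{k-1} + Δ_k` if `k` is odd,
`y_k = y_{k-1} - Δ_k` if `k` is even. -/
def yseq (Δ : ℕ → ℤ) : ℕ → ℤ
  | 0 => 0
  | k + 1 => yseq Δ k + (if (k + 1) % 2 = 1 then Δ (k + 1) else - Δ (k + 1))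

/-- Construction 2: the point `t_k = (k·q, y_k)`. -/
noncomputable def tPt (q : ℕ) (Δ : ℕ → ℤ) (k : ℕ) : EuclideanSpace ℝ (Fin 2) :=
  mk2 ((k * q : ℕ) : ℝ) ((yseq Δ k : ℤ) : ℝ)

/-- Construction 2: the points `s_m = (m·ℓ·q, -2ℓq)` for `m = 0, 1, 2`. -/
noncomputable def sPt (q l m : ℕ) : EuclideanSpace ℝ (Fin 2) :=
  mk2 ((m * l * q : ℕ) : ℝ) (-((2 * l * q : ℕ) : ℝ))

/-- The point associated with an index of the side `A = {t_k : k even} ∪ {s₁}`: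
`Sum.inl i ↦ t_{2i}` (for `0 ≤ i ≤ ℓ`) and `Sum.inr () ↦ s₁`. -/
noncomputable def paPt (q l : ℕ) (Δ : ℕ → ℤ) : Fin (l + 1) ⊕ Unit → EuclideanSpace ℝ (Fin 2)
  | Sum.inl i => tPt q Δ (2 * (i : ℕ))
  | Sum.inr _ => sPt q l 1

/-- The point associated with an index of the side `B = {t_k : k odd} ∪ {s₀, s₂}`:
`Sum.inl i ↦ t_{2i+1}` (for `0 ≤ i ≤ ℓ-1`), `Sum.inr 0 ↦ s₀` and `Sum.inr 1 ↦ s₂`. -/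
noncomputable def pbPt (q l : ℕ) (Δ : ℕ → ℤ) : Fin l ⊕ Fin 2 → EuclideanSpace ℝ (Fin 2)
  | Sum.inl i => tPt q Δ (2 * (i : ℕ) + 1)
  | Sum.inr m => sPt q l (if m = 0 then 0 else 2)

/-- The weight of a perfect matching `M` (a bijection from side `A` to side `B`) in
Construction 2: the sum of the Euclidean lengths of its edges. -/
noncomputable def mWeight (q l : ℕ) (Δ : ℕ → ℤ)
    (M : Fin (l + 1) ⊕ Unit → Fin l ⊕ Fin 2) : ℝ :=
  ∑ a : Fin (l + 1) ⊕ Unit, ‖paPt q l Δ a - pbPt q l Δ (M a)‖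

/-- The matching `M₁′ = {(t_{k-1}, t_k) : k odd} ∪ {(t_{2ℓ}, s₂), (s₀, s₁)}`. -/
def M1' (l : ℕ) : Fin (l + 1) ⊕ Unit → Fin l ⊕ Fin 2
  | Sum.inl i => if h : (i : ℕ) < l then Sum.inl ⟨(i : ℕ), h⟩ else Sum.inr 1
  | Sum.inr _ => Sum.inr 0

/-- The matching `M₂′ = {(t_{k-1}, t_k) : k even, k ≥ 2} ∪ {(t₀, s₀), (s₁, s₂)}`. -/
def M2' (l : ℕ) : Fin (l + 1) ⊕ Unit → Fin l ⊕ Fin 2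
  | Sum.inl i =>
      if h : 0 < (i : ℕ) then Sum.inl ⟨(i : ℕ) - 1, by have := i.isLt; omega⟩
      else Sum.inr 0
  | Sum.inr _ => Sum.inr 1

/-! ### Lengths of the edges -/

lemma norm_mk2_sub (a b c d : ℝ) :
    ‖mk2 a b - mk2 c d‖ = √((a - c) ^ 2 + (b - d) ^ 2) := by
  simp [mk2, EuclideanSpace.norm_eq, Fin.sum_univ_two]

lemma abs_fst_le (a b c d : ℝ) : |a - c| ≤ ‖mk2 a b - mk2 c d‖ := by
  rw [norm_mk2_sub]
  exact Real.abs_le_sqrt (by nlinarith [sq_nonneg (b - d)])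

lemma abs_snd_le (a b c d : ℝ) : |b - d| ≤ ‖mk2 a b - mk2 c d‖ := by
  rw [norm_mk2_sub]
  exact Real.abs_le_sqrt (by nlinarith [sq_nonneg (a - c)])

lemma le_norm_tPt_sub_tPt (q : ℕ) (Δ : ℕ → ℤ) (j k : ℕ) (m : ℤ)
    (h : m ≤ |(j : ℤ) - k|) : (m : ℝ) * q ≤ ‖tPt q Δ j - tPt q Δ k‖ := by
  refine le_trans ?_ (abs_fst_le _ _ _ _)
  have h' : (m : ℝ) ≤ |(j : ℝ) - k| := by exact_mod_cast h
  push_cast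
  rw [← sub_mul, abs_mul, Nat.abs_cast]
  gcongr

/-- Every point `t_k` with `y_k ≥ 0` is at vertical distance at least `2ℓq` from every `s_m`. -/
lemma le_norm_tPt_sub_sPt (q l m k : ℕ) (Δ : ℕ → ℤ) (h : 0 ≤ yseq Δ k) :
    2 * l * q ≤ ‖tPt q Δ k - sPt q l m‖ := by
  refine le_trans ?_ ((le_abs_self _).trans (abs_snd_le _ _ _ _))
  have : (0 : ℝ) ≤ yseq Δ k := by exact_mod_cast h
  push_cast
  linarith

/-- If `t_k` and `s_m` are also at horizontal distance at least `2q`, their distance exceeds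
`2ℓq` by at least `ℓ`. -/
lemma add_le_norm_tPt_sub_sPt (q l m k : ℕ) (Δ : ℕ → ℤ) (h : 0 ≤ yseq Δ k)
    (hl : 2 * (l : ℝ) ^ 2 ≤ q) (hx : 2 ≤ |(k : ℤ) - m * l|) :
    2 * l * q + l ≤ ‖tPt q Δ k - sPt q l m‖ := by
  unfold tPt sPt
  rw [norm_mk2_sub]
  have hy : (0 : ℝ) ≤ yseq Δ k := by exact_mod_cast h
  have hx' : (2 : ℝ) ≤ |(k : ℝ) - m * l| := by exact_mod_cast hx
  have hsq : (4 : ℝ) ≤ ((k : ℝ) - m * l) ^ 2 := by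
    rw [← sq_abs]; nlinarith
  apply Real.le_sqrt_of_sq_le
  push_cast
  have hq : (0 : ℝ) ≤ q := by positivity
  have hlq : (0 : ℝ) ≤ l * q := by positivity
  have e1 : 4 * (q : ℝ) ^ 2 ≤ ((k : ℝ) * q - m * l * q) ^ 2 := by
    rw [← sub_mul, mul_pow]; gcongr
  have e2 : (2 * l * q : ℝ) ^ 2 ≤ ((yseq Δ k : ℝ) - -(2 * l * q)) ^ 2 := by
    apply pow_le_pow_left₀ (by positivity); linarith
  -- the excess `4ℓ²q + ℓ²` is at most `2q² + q/2`, and `q ≤ q²` since `q` is an integer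
  have e3 : (q : ℝ) ≤ (q : ℝ) ^ 2 := by exact_mod_cast Nat.le_self_pow two_ne_zero q
  nlinarith [mul_le_mul_of_nonneg_right hl hq]

lemma norm_sPt_one_sub (q l m : ℕ) (hm : m = 0 ∨ m = 2) :
    ‖sPt q l 1 - sPt q l m‖ = l * q := by
  unfold sPt
  rw [norm_mk2_sub]
  rw [Real.sqrt_eq_iff_eq_sq (by positivity) (by positivity)]
  rcases hm with rfl | rfl <;> push_cast <;> ring

lemma odd_edge_le (n k : ℕ) (Δ : ℕ → ℤ) (hn : 2 ≤ n)
    (h : 1 ≤ Δ (2 * k + 1) ∧ Δ (2 * k + 1) ≤ (n : ℤ) ^ 2) :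
    ‖tPt (n ^ 4) Δ (2 * k) - tPt (n ^ 4) Δ (2 * k + 1)‖ ≤ (n : ℝ) ^ 4 + 1 / 2 := by
  unfold tPt
  have hy : yseq Δ (2 * k + 1) = yseq Δ (2 * k) + Δ (2 * k + 1) := by
    rw [yseq, if_pos (by omega)]
  rw [norm_mk2_sub, hy]
  apply Real.sqrt_le_iff.mpr ⟨by positivity, ?_⟩
  have h1 : (1 : ℝ) ≤ Δ (2 * k + 1) := by exact_mod_cast h.1
  have h2 : (Δ (2 * k + 1) : ℝ) ≤ (n : ℝ) ^ 2 := by exact_mod_cast h.2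
  push_cast
  have : (Δ (2 * k + 1) : ℝ) ^ 2 ≤ ((n : ℝ) ^ 2) ^ 2 := by gcongr
  nlinarith

/-! ### Weights of matchings -/

lemma mWeight_M1' (q l : ℕ) (Δ : ℕ → ℤ) (hy2l : yseq Δ (2 * l) = 0) :
    mWeight q l Δ (M1' l)
      = (∑ i : Fin l, ‖tPt q Δ (2 * (i : ℕ)) - tPt q Δ (2 * (i : ℕ) + 1)‖) + 3 * l * q := by
  have e1 : ‖tPt q Δ (2 * l) - sPt q l 2‖ = 2 * l * q := by
    unfold tPt sPt
    rw [norm_mk2_sub, hy2l, Real.sqrt_eq_iff_eq_sq (by positivity) (by positivity)]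
    push_cast; ring
  have e2 := norm_sPt_one_sub q l 0 (Or.inl rfl)
  simp only [mWeight, Fintype.sum_sum_type, Fin.sum_univ_castSucc, M1', paPt, Fin.val_castSucc,
    Fin.is_lt, dite_true, pbPt, Fin.val_last, lt_irrefl, dite_false, Finset.univ_unique,
    Finset.sum_singleton, if_true, one_ne_zero, if_false, e1, e2]
  ring

/-- The weight of a matching as a sum over the side `B`. -/
lemma mWeight_symm (q l : ℕ) (Δ : ℕ → ℤ) (e : Fin (l + 1) ⊕ Unit ≃ Fin l ⊕ Fin 2) :
    mWeight q l Δ e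
      = (∑ i : Fin l, ‖paPt q l Δ (e.symm (Sum.inl i)) - tPt q Δ (2 * (i : ℕ) + 1)‖)
        + (‖paPt q l Δ (e.symm (Sum.inr 0)) - sPt q l 0‖
          + ‖paPt q l Δ (e.symm (Sum.inr 1)) - sPt q l 2‖) := by
  unfold mWeight
  rw [← Equiv.sum_comp e.symm]
  simp [Fintype.sum_sum_type, pbPt]

/-! ### Matchings all of whose gaps equal `q` -/

/-- If every `t_{2i+1}` is matched to a neighbour `t_{2 g(i)}` and `t_{2ℓ}` is not used, then each
is matched to its left neighbour: this is forced from the right end inwards. -/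
lemma forced_right {l : ℕ} (g : Fin l → ℕ) (hg : Function.Injective g)
    (h : ∀ i, g i = i ∨ g i = i + 1) (hl : ∀ i, g i ≠ l) (i : Fin l) : g i = i := by
  by_contra hne
  have key : ∀ d : ℕ, ∀ i : Fin l, (i : ℕ) + d + 1 = l → g i = i := by
    intro d
    induction d with
    | zero =>
      intro i hi
      have := hl i
      rcases h i with h | h <;> omega
    | succ d ih =>
      intro i hi
      rcases h i with h | h
      · exact h
      · have := ih ⟨i + 1, by omega⟩ (by simp only; omega)
        have := congrArg Fin.val (hg (h.trans this.symm))
        simp at this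
  exact hne (key (l - i - 1) i (by omega))

/-- The mirror image of `forced_right`: if `t₀` is not used, each `t_{2i+1}` is matched to its right
neighbour. -/
lemma forced_left {l : ℕ} (g : Fin l → ℕ) (hg : Function.Injective g)
    (h : ∀ i, g i = i ∨ g i = i + 1) (h0 : ∀ i, g i ≠ 0) (i : Fin l) : g i = i + 1 := by
  obtain ⟨k, hk⟩ := i
  induction k with
  | zero =>
    have := h0 ⟨0, hk⟩
    rcases h ⟨0, hk⟩ with h | h <;> simp_all
  | succ k ih =>
    rcases h ⟨k + 1, hk⟩ with h | h
    · have := congrArg Fin.val (hg (h.trans (ih (by omega)).symm))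
      simp at this
    · exact h

/-! ### Lower bound for the remaining matchings -/

lemma sum_lower {l : ℕ} (f : Fin l → ℝ) (q : ℝ) (h : ∀ i, q ≤ f i) : l * q ≤ ∑ i, f i := by
  simpa using Finset.card_nsmul_le_sum Finset.univ f q (fun i _ => h i)

lemma sum_lower_add {l : ℕ} (f : Fin l → ℝ) (q c : ℝ) (h : ∀ i, q ≤ f i) (i₀ : Fin l)
    (hc : q + c ≤ f i₀) : l * q + c ≤ ∑ i, f i := by
  have h1 : ∑ i, (q + if i = i₀ then c else 0) ≤ ∑ i, f i := by
    apply Finset.sum_le_sum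
    intro i _
    split_ifs with hi
    · rw [hi]; exact hc
    · simpa using h i
  simpa [Finset.sum_add_distrib] using h1

lemma le_norm_paPt_sub_tPt (q l : ℕ) (hl1 : 1 ≤ l) (Δ : ℕ → ℤ)
    (hy : ∀ k ≤ 2 * l, 0 ≤ yseq Δ k) (a : Fin (l + 1) ⊕ Unit) (i : Fin l) :
    (q : ℝ) ≤ ‖paPt q l Δ a - tPt q Δ (2 * (i : ℕ) + 1)‖ := by
  rcases a with j | u
  · have := le_norm_tPt_sub_tPt q Δ (2 * j) (2 * i + 1) 1 (by
      rw [le_abs]; push_cast; omega)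
    simpa [paPt] using this
  · have := le_norm_tPt_sub_sPt q l 1 (2 * i + 1) Δ (hy _ (by omega))
    rw [norm_sub_rev] at this
    have hl : (1 : ℝ) ≤ l := by exact_mod_cast hl1
    have hq : (0 : ℝ) ≤ q := by positivity
    simp only [paPt]
    nlinarith

/-- A matching other than `M₁′` and `M₂′` has weight at least `4ℓq + ℓ`. -/
lemma eq_or_eq_or_lower (q l : ℕ) (hl1 : 1 ≤ l) (hq : 2 * (l : ℝ) ^ 2 ≤ q) (Δ : ℕ → ℤ)
    (hy : ∀ k ≤ 2 * l, 0 ≤ yseq Δ k) (e : Fin (l + 1) ⊕ Unit ≃ Fin l ⊕ Fin 2) :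
    (⇑e = M1' l) ∨ (⇑e = M2' l) ∨ 4 * l * q + l ≤ mWeight q l Δ e := by
  rw [mWeight_symm]
  have hl : (1 : ℝ) ≤ l := by exact_mod_cast hl1
  have hql : (l : ℝ) ≤ 2 * q := by nlinarith
  have hq1 : (1 : ℝ) ≤ q := by nlinarith
  have hpa : ∀ j, paPt q l Δ (Sum.inl j) = tPt q Δ (2 * (j : ℕ)) := fun _ => rfl
  have hlow := fun i => le_norm_paPt_sub_tPt q l hl1 Δ hy (e.symm (Sum.inl i)) i
  have hs := sum_lower _ _ hlow
  have hadd := fun c => sum_lower_add _ (q : ℝ) c hlow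
  -- an edge at an odd `t_k` whose gap is not `q` has gap at least `3q`
  have hgap : ∀ (i : Fin l) (j : Fin (l + 1)), ¬ ((j : ℕ) = i ∨ (j : ℕ) = i + 1) →
      (q : ℝ) + 2 * q ≤ ‖paPt q l Δ (Sum.inl j) - tPt q Δ (2 * (i : ℕ) + 1)‖ := by
    intro i j hij
    have := le_norm_tPt_sub_tPt q Δ (2 * j) (2 * i + 1) 3 (by
      rw [le_abs]; push_cast; omega)
    simp only [paPt]
    push_cast at this
    linarith
  -- once `s₁` is matched to an `s`-point, the edges at odd `t_k` define an injective map
  have hinl : ∀ m, e.symm (Sum.inr m) = Sum.inr () → ∃ g : Fin l → Fin (l + 1),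
      (∀ i, e.symm (Sum.inl i) = Sum.inl (g i)) ∧ Function.Injective fun i => (g i : ℕ) := by
    intro m hm
    have : ∀ i, ∃ j, e.symm (Sum.inl i) = Sum.inl j := by
      intro i
      rcases h : e.symm (Sum.inl i) with j | u
      · exact ⟨j, rfl⟩
      · have := e.symm.injective (h.trans hm.symm)
        cases this
    choose g hg using this
    refine ⟨g, hg, fun i i' hii => ?_⟩
    have h1 : g i = g i' := Fin.ext hii
    have h2 : e.symm (Sum.inl i) = e.symm (Sum.inl i') := by rw [hg, hg, h1]
    exact Sum.inl_injective (e.symm.injective h2)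
  rcases h0 : e.symm (Sum.inr 0) with j | u
  · rcases h1 : e.symm (Sum.inr 1) with k | u
    · -- `s₁` is matched to an odd `t_k`
      right; right
      rcases hi : e (Sum.inr ()) with i | m
      · have hi' : e.symm (Sum.inl i) = Sum.inr () := by rw [← hi]; simp
        have b0 := le_norm_tPt_sub_sPt q l 0 (2 * j) Δ (hy _ (by omega))
        have b1 := le_norm_tPt_sub_sPt q l 2 (2 * k) Δ (hy _ (by omega))
        have b2 := le_norm_tPt_sub_sPt q l 1 (2 * i + 1) Δ (hy _ (by omega))
        rw [norm_sub_rev] at b2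
        have := hadd (2 * l * q - q) i (by rw [hi']; simp only [paPt]; linarith)
        simp only [hpa]
        nlinarith
      · exfalso
        have hm : e.symm (Sum.inr m) = Sum.inr () := by rw [← hi]; simp
        fin_cases m <;> simp_all
    · -- `s₁` is matched to `s₂`
      obtain ⟨g, hg, ginj⟩ := hinl 1 h1
      have b1 : ‖paPt q l Δ (Sum.inr u) - sPt q l 2‖ = l * q :=
        norm_sPt_one_sub q l 2 (Or.inr rfl)
      rw [b1]
      by_cases hj : (j : ℕ) = 0
      · by_cases hall : ∀ i, (g i : ℕ) = i ∨ (g i : ℕ) = i + 1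
        · right; left
          have hf := forced_left _ ginj hall (fun i hi => by
            have : g i = j := Fin.ext (hi.trans hj.symm)
            have := e.symm.injective ((hg i).trans (this ▸ h0.symm))
            cases this)
          funext a
          rw [← Equiv.eq_symm_apply, eq_comm]
          rcases a with a | a
          · by_cases ha : 0 < (a : ℕ)
            · simp only [M2', ha, dite_true, hg]
              congr 1
              ext
              rw [hf]; simp only; omega
            · simp only [M2', ha, dite_false, h0]
              congr 1
              ext; omega
          · simpa [M2'] using h1
        · right; right
          push Not at hall
          obtain ⟨i, hi⟩ := hall
          have b0 := le_norm_tPt_sub_sPt q l 0 (2 * j) Δ (hy _ (by omega))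
          have := hadd (2 * q) i (by rw [hg]; exact hgap i (g i) (by tauto))
          simp only [hpa]
          linarith
      · right; right
        have b0 := add_le_norm_tPt_sub_sPt q l 0 (2 * j) Δ (hy _ (by omega)) hq (by
          rw [le_abs]; push_cast; omega)
        simp only [hpa]
        linarith
  · -- `s₁` is matched to `s₀`
    obtain ⟨g, hg, ginj⟩ := hinl 0 h0
    have b1 : ‖paPt q l Δ (Sum.inr u) - sPt q l 0‖ = l * q :=
      norm_sPt_one_sub q l 0 (Or.inl rfl)
    rw [b1]
    rcases h1 : e.symm (Sum.inr 1) with j | v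
    · by_cases hj : (j : ℕ) = l
      · by_cases hall : ∀ i, (g i : ℕ) = i ∨ (g i : ℕ) = i + 1
        · left
          have hf := forced_right _ ginj hall (fun i hi => by
            have : g i = j := Fin.ext (hi.trans hj.symm)
            have := e.symm.injective ((hg i).trans (this ▸ h1.symm))
            cases this)
          funext a
          rw [← Equiv.eq_symm_apply, eq_comm]
          rcases a with a | a
          · by_cases ha : (a : ℕ) < l
            · simp only [M1', ha, dite_true, hg]
              congr 1
              ext
              rw [hf]
            · simp only [M1', ha, dite_false, h1]
              congr 1
              ext; omega
          · simpa [M1'] using h0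
        · right; right
          push Not at hall
          obtain ⟨i, hi⟩ := hall
          have b0 := le_norm_tPt_sub_sPt q l 2 (2 * j) Δ (hy _ (by omega))
          have := hadd (2 * q) i (by rw [hg]; exact hgap i (g i) (by tauto))
          simp only [hpa]
          linarith
      · right; right
        have b0 := add_le_norm_tPt_sub_sPt q l 2 (2 * j) Δ (hy _ (by omega)) hq (by
          rw [le_abs]; push_cast; omega)
        simp only [hpa]
        linarith
    · exfalso
      have := e.symm.injective (h0.trans h1.symm)
      simp at this

/-! ### Minimality and uniqueness -/

/-- In Construction 2, assuming `w(M₁′) ≤ w(M₂′)`: `M₁′` is a minimum-weight perfect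
matching, its weight equals `Σ_{k odd} ‖t_{k-1} - t_k‖ + 3ℓq`, and every perfect matching
other than `M₁′` and `M₂′` has strictly larger weight. -/
theorem stmt_8 (n l : ℕ) (hn : 2 ≤ n) (hl1 : 1 ≤ l) (hln : l ≤ n)
    (Δ : ℕ → ℤ) (hΔ : ∀ k, 1 ≤ k → k ≤ 2 * l → 1 ≤ Δ k ∧ Δ k ≤ (n : ℤ) ^ 2)
    (hy : ∀ k ≤ 2 * l, 0 ≤ yseq Δ k) (hy2l : yseq Δ (2 * l) = 0)
    (hM12 : mWeight (n ^ 4) l Δ (M1' l) ≤ mWeight (n ^ 4) l Δ (M2' l)) :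
    (∀ M : Fin (l + 1) ⊕ Unit → Fin l ⊕ Fin 2, Function.Bijective M →
        mWeight (n ^ 4) l Δ (M1' l) ≤ mWeight (n ^ 4) l Δ M) ∧
    mWeight (n ^ 4) l Δ (M1' l)
        = (∑ i : Fin l, ‖tPt (n ^ 4) Δ (2 * (i : ℕ)) - tPt (n ^ 4) Δ (2 * (i : ℕ) + 1)‖)
            + 3 * l * n ^ 4 ∧
    (∀ M : Fin (l + 1) ⊕ Unit → Fin l ⊕ Fin 2, Function.Bijective M →
        M ≠ M1' l → M ≠ M2' l →
        mWeight (n ^ 4) l Δ (M1' l) < mWeight (n ^ 4) l Δ M) := by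
  have hl : (1 : ℝ) ≤ l := by exact_mod_cast hl1
  have hq : 2 * (l : ℝ) ^ 2 ≤ (n ^ 4 : ℕ) := by
    have h1 : 2 * l ^ 2 ≤ n ^ 4 := by
      have h2 : l ^ 2 ≤ n ^ 2 := Nat.pow_le_pow_left hln 2
      nlinarith [Nat.pow_le_pow_left hn 2]
    exact_mod_cast h1
  have hw := mWeight_M1' (n ^ 4) l Δ hy2l
  have hsum : ∑ i : Fin l, ‖tPt (n ^ 4) Δ (2 * (i : ℕ)) - tPt (n ^ 4) Δ (2 * (i : ℕ) + 1)‖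
      ≤ l * ((n : ℝ) ^ 4 + 1 / 2) := by
    simpa [mul_add] using Finset.sum_le_card_nsmul Finset.univ _ _ fun (i : Fin l) _ =>
      odd_edge_le n i Δ hn (hΔ _ (by omega) (by omega))
  push_cast at hw
  have hstrict : ∀ M : Fin (l + 1) ⊕ Unit → Fin l ⊕ Fin 2, Function.Bijective M →
      M ≠ M1' l → M ≠ M2' l → mWeight (n ^ 4) l Δ (M1' l) < mWeight (n ^ 4) l Δ M := by
    intro M hM hM1 hM2
    rcases eq_or_eq_or_lower (n ^ 4) l hl1 hq Δ hy (Equiv.ofBijective M hM) with h | h | h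
    · exact absurd h hM1
    · exact absurd h hM2
    · rw [Equiv.coe_ofBijective] at h
      push_cast at h
      linarith
  refine ⟨fun M hM => ?_, hw, hstrict⟩
  by_cases hM1 : M = M1' l
  · rw [hM1]
  by_cases hM2 : M = M2' l
  · rw [hM2]; exact hM12
  exact (hstrict M hM hM1 hM2).le
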